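/- Let ρ be a nonempty duplicate-free list over α with last element x, and let o be an object not among the entries of ρ. Then the tail extension is the unique consistent combination: ρ ⊕ [x, o] = { ρ ++ [o] }. Consequently, for any database D, g(ρ ++ [o]) = g(ρ) ∩ g([x, o]) and supp(ρ ++ [o]) = #(g(ρ) ∩ g([x, o])). -/

import Mathlib

/-!
In a duplicate-free list `t` the last entry `x` of `ρ` occurs only once, so an embedding of `ρ`
in `t` and an embedding of `x :: τ` in `t` send `x` to the same position and glue there to an
embedding of `ρ ++ τ`; the tail extension is the case `τ = [o]`. Applied to each transaction, this
computes the closure. Consistent combinations are the duplicate-free lists on the union of the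
entries that have both rankings as sublists, so each of them contains `ρ ++ τ` and, having no
further entries, equals it.
-/

open scoped Classical

/-- `gcl D π` is the multiset of transactions of `D` of which `π` is a sublist. -/
noncomputable def gcl {α : Type*} (D : Multiset (List α)) (π : List α) :
    Multiset (List α) :=
  D.filter (fun t => π.Sublist t)

/-- The (absolute) support of a ranking `π` in the database `D`. -/
noncomputable def supp {α : Type*} (D : Multiset (List α)) (π : List α) : ℕ :=
  (gcl D π).card

/-- `oplus πA πB` is the set of consistent combinations of `πA` and `πB`. -/
def oplus {α : Type*} [DecidableEq α] (πA πB : List α) : Set (List α) :=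
  {m | m.Nodup ∧ (∀ x, x ∈ m ↔ x ∈ πA ∨ x ∈ πB) ∧
    m.filter (fun x => decide (x ∈ πA)) = πA ∧
    m.filter (fun x => decide (x ∈ πB)) = πB}

section Sublist

variable {α : Type*} {l m ρ τ t : List α}

lemma sublist_eq_of_nodup_of_subset (hlm : l.Sublist m) (hm : m.Nodup) (hml : m ⊆ l) : l = m :=
  hlm.eq_of_length_le (hm.subperm hml).length_le

lemma filter_mem_eq_iff_sublist [DecidableEq α] (hm : m.Nodup) :
    m.filter (fun x => decide (x ∈ l)) = l ↔ l.Sublist m := by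
  constructor
  · intro h
    exact h ▸ List.filter_sublist
  · intro h
    have hl : l.filter (fun x => decide (x ∈ l)) = l := List.filter_eq_self.2 (by simp)
    have hsub : l.Sublist (m.filter fun x => decide (x ∈ l)) := by
      simpa only [hl] using h.filter fun x => decide (x ∈ l)
    exact (sublist_eq_of_nodup_of_subset hsub (hm.filter _) (by simp [List.subset_def])).symm

lemma cons_sublist_append_iff_of_notMem {x : α} (hx : x ∉ l) :
    (x :: τ).Sublist (l ++ m) ↔ (x :: τ).Sublist m := by
  induction l with
  | nil => rfl
  | cons y l ih =>
    obtain ⟨hxy, hxl⟩ := not_or.1 (List.mem_cons.not.1 hx)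
    simp [List.cons_sublist_cons', hxy, ih hxl]

lemma append_sublist_iff_sublist_and_getLast_cons_sublist (ht : t.Nodup) (hne : ρ ≠ []) :
    (ρ ++ τ).Sublist t ↔ ρ.Sublist t ∧ (ρ.getLast hne :: τ).Sublist t := by
  obtain ⟨σ, x, rfl⟩ := (List.eq_nil_or_concat' ρ).resolve_left hne
  rw [List.getLast_append_singleton]
  constructor
  · intro h
    refine ⟨(List.sublist_append_left _ _).trans h, ?_⟩
    rw [List.append_assoc] at h
    exact (List.sublist_append_right _ _).trans h
  · rintro ⟨hσx, hxτ⟩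
    obtain ⟨t₁, t₂, rfl, hσ, hx⟩ := List.append_sublist_iff.1 hσx
    have hx₁ : x ∉ t₁ := fun h => List.disjoint_of_nodup_append ht h (List.singleton_sublist.1 hx)
    have hxτ₂ : (x :: τ).Sublist t₂ := (cons_sublist_append_iff_of_notMem hx₁).1 hxτ
    simpa using hσ.append hxτ₂

end Sublist

lemma le_gcl_iff {α : Type*} {D s : Multiset (List α)} {π : List α} :
    s ≤ gcl D π ↔ s ≤ D ∧ ∀ t ∈ s, π.Sublist t :=
  Multiset.le_filter

section Ranking

variable {α : Type*} [DecidableEq α] {πA πB ρ τ m : List α}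

lemma mem_oplus_iff_sublist :
    m ∈ oplus πA πB ↔
      m.Nodup ∧ (∀ x, x ∈ m ↔ x ∈ πA ∨ x ∈ πB) ∧ πA.Sublist m ∧ πB.Sublist m :=
  and_congr_right fun hm => and_congr_right fun _ =>
    and_congr (filter_mem_eq_iff_sublist hm) (filter_mem_eq_iff_sublist hm)

lemma oplus_getLast_cons (hne : ρ ≠ []) (hρτ : (ρ ++ τ).Nodup) :
    oplus ρ (ρ.getLast hne :: τ) = {ρ ++ τ} := by
  have entries (y : α) : y ∈ ρ ++ τ ↔ y ∈ ρ ∨ y ∈ ρ.getLast hne :: τ := by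
    have := List.getLast_mem hne
    grind
  ext m
  rw [mem_oplus_iff_sublist, Set.mem_singleton_iff]
  constructor
  · rintro ⟨hm, hmem, hρ, hτ⟩
    have hsub : (ρ ++ τ).Sublist m :=
      (append_sublist_iff_sublist_and_getLast_cons_sublist hm hne).2 ⟨hρ, hτ⟩
    have hsubset : m ⊆ ρ ++ τ := fun y hy => (entries y).2 ((hmem y).1 hy)
    exact (sublist_eq_of_nodup_of_subset hsub hm hsubset).symm
  · rintro rfl
    exact ⟨hρτ, entries,
      (append_sublist_iff_sublist_and_getLast_cons_sublist hρτ hne).1 (List.Sublist.refl _)⟩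

lemma gcl_append_eq_inter {D : Multiset (List α)} (hD : ∀ t ∈ D, t.Nodup) (hne : ρ ≠ []) :
    gcl D (ρ ++ τ) = gcl D ρ ∩ gcl D (ρ.getLast hne :: τ) := by
  refine eq_of_forall_le_iff fun s => ?_
  simp only [Multiset.le_inter_iff, le_gcl_iff, ← and_and_left, ← forall₂_and]
  refine and_congr_right fun hsD => forall₂_congr fun t ht => ?_
  exact append_sublist_iff_sublist_and_getLast_cons_sublist (hD t (Multiset.mem_of_le hsD ht)) hne

end Ranking

theorem tail_extension_general {α : Type*} [DecidableEq α] {ρ τ : List α} (hne : ρ ≠ [])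
    (hρτ : (ρ ++ τ).Nodup) :
    oplus ρ (ρ.getLast hne :: τ) = {ρ ++ τ} ∧
      ∀ D : Multiset (List α), (∀ t ∈ D, t.Nodup) →
        gcl D (ρ ++ τ) = gcl D ρ ∩ gcl D (ρ.getLast hne :: τ) ∧
          supp D (ρ ++ τ) = (gcl D ρ ∩ gcl D (ρ.getLast hne :: τ)).card := by
  refine ⟨oplus_getLast_cons hne hρτ, fun D hD => ?_⟩
  have hgcl := gcl_append_eq_inter (τ := τ) hD hne
  exact ⟨hgcl, congrArg Multiset.card hgcl⟩

/-- the tail extension `ρ ++ [o]` is the unique consistent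
combination of `ρ` with `[last(ρ), o]`, and hence its g-closure and support
can be computed by intersecting g-closures. -/
theorem tail_extension {α : Type*} [Fintype α] [DecidableEq α]
    (ρ : List α) (hρ : ρ.Nodup) (hne : ρ ≠ []) (o : α) (ho : o ∉ ρ) :
    oplus ρ [ρ.getLast hne, o] = {ρ ++ [o]} ∧
      ∀ D : Multiset (List α), (∀ t ∈ D, t.Nodup) →
        gcl D (ρ ++ [o]) = gcl D ρ ∩ gcl D [ρ.getLast hne, o] ∧
          supp D (ρ ++ [o]) = (gcl D ρ ∩ gcl D [ρ.getLast hne, o]).card :=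
  tail_extension_general hne (List.concat_eq_append ▸ hρ.concat ho)
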